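/- Let k ≥ 2 and let U ∈ G_q(n,k). Then the one-orbit cyclic subspace code Orb(U) has minimum distance 2k − 2 and cardinality (q^n−1)/(q−1) if and only if U is a Sidon space, i.e., dim_{F_q}(U ∩ αU) ≤ 1 for every α ∈ F_{q^n} \ F_q. -/

import Mathlib

/-!
All members of `orb U` have dimension `k`, so `d(V, W) = 2k - 2 dim (V ∩ W)`, and distance `2k - 2`
means a one-dimensional intersection.

If the minimum distance is `2k - 2`, some `aU ∩ bU` is a line. Any `β` with `βU = U` maps this line
to itself, hence lies in `Fq`: the orbit has full length (`fullLength_of_line`). So for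
`α ∉ Fq` the subspaces `U` and `αU` are distinct members of the code, and the bound on the
distance says `dim (U ∩ αU) ≤ 1`.

Conversely, for a Sidon space, `βU = U` with `β ∉ Fq` would give `k ≤ 1`; so the stabilizer is
`Fqˣ`, and the cardinality follows from counting cosets (`ncard_orb`). Distinct `aU`, `bU` have
`b / a ∉ Fq`, so they meet in dimension at most one; for independent `u, v ∈ U` and `α = u / v`,
the intersection `U ∩ αU` contains `u`, so the distance `2k - 2` is attained.

`Fn` may be infinite: then both sides of the cardinality identity are `0`.
-/

open Module Submodule Filter

noncomputable section

/-- For `α` in a field `F` and an `Fq`-subspace `V` of `F`,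
the subspace `α·V = {α·v : v ∈ V}`. -/
def mulSub {Fq F : Type*} [Field Fq] [Field F] [Algebra Fq F]
    (α : F) (V : Submodule Fq F) : Submodule Fq F :=
  V.map (LinearMap.mulLeft Fq α)

/-- The orbit `Orb(V) = {α·V : α ∈ Fˣ}` of a subspace `V` under the Singer cycle. -/
def orb {Fq F : Type*} [Field Fq] [Field F] [Algebra Fq F]
    (V : Submodule Fq F) : Set (Submodule Fq F) :=
  {W | ∃ α : Fˣ, W = mulSub (α : F) V}

/-- The subspace distance `d(U,W) = dim(U+W) - dim(U∩W)`. -/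
def sdist {Fq F : Type*} [Field Fq] [Field F] [Algebra Fq F]
    (U W : Submodule Fq F) : ℕ :=
  finrank Fq ↥(U ⊔ W) - finrank Fq ↥(U ⊓ W)

/-- The minimum distance of a subspace code `C`:
the minimum of `d(U,W)` over distinct `U, W ∈ C`. -/
def minDist {Fq F : Type*} [Field Fq] [Field F] [Algebra Fq F]
    (C : Set (Submodule Fq F)) : ℕ :=
  sInf {d : ℕ | ∃ U ∈ C, ∃ W ∈ C, U ≠ W ∧ d = sdist U W}

/-- `Orb(V)` has full-length, i.e. the stabilizer of `V` is `Fq^*`: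
`β·V = V` with `β ≠ 0` forces `β ∈ Fq`. -/
def FullLengthOrbit {Fq F : Type*} [Field Fq] [Field F] [Algebra Fq F]
    (V : Submodule Fq F) : Prop :=
  ∀ β : F, β ≠ 0 → mulSub β V = V → β ∈ Set.range (algebraMap Fq F)

section

variable {Fq F : Type*} [Field Fq] [Field F] [Algebra Fq F]

lemma mem_mulSub {α : F} {V : Submodule Fq F} {x : F} :
    x ∈ mulSub α V ↔ ∃ v ∈ V, α * v = x := by
  simp [mulSub, Submodule.mem_map]

lemma mulSub_mulSub (α β : F) (V : Submodule Fq F) :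
    mulSub α (mulSub β V) = mulSub (α * β) V := by
  simp [mulSub, LinearMap.mulLeft_mul, Submodule.map_comp]

lemma mulSub_one (V : Submodule Fq F) : mulSub 1 V = V := by
  simp [mulSub]

lemma mulSub_inf {α : F} (hα : α ≠ 0) (V W : Submodule Fq F) :
    mulSub α (V ⊓ W) = mulSub α V ⊓ mulSub α W :=
  Submodule.map_inf _ (mul_right_injective₀ hα)

lemma finrank_mulSub {α : F} (hα : α ≠ 0) (V : Submodule Fq F) :
    finrank Fq (mulSub α V) = finrank Fq V :=
  (V.equivMapOfInjective _ (mul_right_injective₀ hα)).finrank_eq.symm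

instance (α : F) (V : Submodule Fq F) [FiniteDimensional Fq V] :
    FiniteDimensional Fq (mulSub α V) :=
  inferInstanceAs (FiniteDimensional Fq (V.map (LinearMap.mulLeft Fq α)))

lemma mulSub_algebraMap {c : Fq} (hc : c ≠ 0) (V : Submodule Fq F) :
    mulSub (algebraMap Fq F c) V = V := by
  ext x
  rw [mem_mulSub]
  constructor
  · rintro ⟨v, hv, rfl⟩
    rw [← Algebra.smul_def]
    exact V.smul_mem c hv
  · intro hx
    refine ⟨c⁻¹ • x, V.smul_mem _ hx, ?_⟩
    rw [← Algebra.smul_def, smul_inv_smul₀ hc]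

/-- Intersections of members of an orbit are translates of intersections with the base space. -/
lemma finrank_inf_mulSub {a : F} (ha : a ≠ 0) (b : F) (V : Submodule Fq F) :
    finrank Fq ↥(mulSub a V ⊓ mulSub b V) = finrank Fq ↥(V ⊓ mulSub (a⁻¹ * b) V) := by
  rw [← finrank_mulSub ha (V ⊓ _), mulSub_inf ha, mulSub_mulSub, mul_inv_cancel_left₀ ha]

lemma sdist_eq {V W : Submodule Fq F} [FiniteDimensional Fq V] [FiniteDimensional Fq W] {k : ℕ}
    (hV : finrank Fq V = k) (hW : finrank Fq W = k) :
    sdist V W = 2 * k - 2 * finrank Fq ↥(V ⊓ W) := by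
  have h := Submodule.finrank_sup_add_finrank_inf_eq V W
  unfold sdist
  omega

/-- If two members of the orbit meet in a line, that line is invariant under the stabilizer of `V`,
so the stabilizer consists of scalars. -/
lemma fullLength_of_line {V : Submodule Fq F} {a b : F}
    (h : finrank Fq ↥(mulSub a V ⊓ mulSub b V) = 1) : FullLengthOrbit V := by
  intro β _ hβV
  have hinv : ∀ c x : F, x ∈ mulSub c V → β * x ∈ mulSub c V := by
    intro c x hx
    rw [← hβV, mulSub_mulSub, mul_comm c β, ← mulSub_mulSub]
    exact mem_mulSub.2 ⟨x, hx, rfl⟩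
  obtain ⟨w, hw0, hw⟩ := finrank_eq_one_iff'.1 h
  obtain ⟨c, hc⟩ := hw ⟨β * w, hinv a _ w.2.1, hinv b _ w.2.2⟩
  refine ⟨c, ?_⟩
  have hc' : c • (w : F) = β * w := congrArg Subtype.val hc
  rw [Algebra.smul_def] at hc'
  exact mul_right_cancel₀ (by simpa using hw0) hc'

/-- A full-length orbit is in bijection with `Fˣ ⧸ Fqˣ`. -/
lemma ncard_orb [Fintype Fq] {V : Submodule Fq F} (hV : FullLengthOrbit V) :
    (orb V).ncard = (Fintype.card Fq ^ finrank Fq F - 1) / (Fintype.card Fq - 1) := by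
  let φ : Fqˣ →* Fˣ := Units.map (algebraMap Fq F).toMonoidHom
  have hφ : Function.Injective φ := Units.map_injective (algebraMap Fq F).injective
  let H : Subgroup Fˣ := φ.range
  have key : ∀ a b : Fˣ, mulSub (a : F) V = mulSub (b : F) V ↔ a⁻¹ * b ∈ H := by
    intro a b
    constructor
    · intro h
      have h1 : mulSub ((a⁻¹ * b : Fˣ) : F) V = V := by
        rw [Units.val_mul, ← mulSub_mulSub, ← h, mulSub_mulSub, ← Units.val_mul, inv_mul_cancel,
          Units.val_one, mulSub_one]
      obtain ⟨c, hc⟩ := hV _ (Units.ne_zero _) h1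
      have hc0 : c ≠ 0 := by
        rintro rfl
        exact Units.ne_zero _ (hc.symm.trans (map_zero _))
      exact ⟨Units.mk0 c hc0, Units.ext hc⟩
    · rintro ⟨c, hc⟩
      have hb : b = a * φ c := by rw [hc, mul_inv_cancel_left]
      have hφc : ((φ c : Fˣ) : F) = algebraMap Fq F c := rfl
      rw [hb, Units.val_mul, ← mulSub_mulSub, hφc, mulSub_algebraMap c.ne_zero]
  let f : Fˣ ⧸ H → Submodule Fq F := fun x => Quotient.liftOn' x (fun a => mulSub (a : F) V)
    fun a b hab => (key a b).2 (QuotientGroup.leftRel_apply.1 hab)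
  have hf : Function.Injective f := by
    intro x y
    induction x using QuotientGroup.induction_on
    induction y using QuotientGroup.induction_on
    exact fun h => QuotientGroup.eq.2 ((key _ _).1 h)
  have hr : orb V = Set.range f := by
    ext W
    constructor
    · rintro ⟨a, rfl⟩
      exact ⟨(a : Fˣ ⧸ H), rfl⟩
    · rintro ⟨x, rfl⟩
      induction x using QuotientGroup.induction_on with
      | H a => exact ⟨a, rfl⟩
  have hcard : (orb V).ncard = Nat.card (Fˣ ⧸ H) := by
    rw [hr, ← Set.image_univ, Set.ncard_image_of_injective _ hf, Set.ncard_univ]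
  have hH : Nat.card H = Fintype.card Fq - 1 := by
    rw [← Nat.card_congr (MonoidHom.ofInjective hφ).toEquiv, Nat.card_units,
      Nat.card_eq_fintype_card]
  have hF : Nat.card Fˣ = Fintype.card Fq ^ finrank Fq F - 1 := by
    rw [Nat.card_units]
    by_cases hfin : FiniteDimensional Fq F
    · rw [Module.natCard_eq_pow_finrank (K := Fq), Nat.card_eq_fintype_card]
    · -- In infinite dimension `finrank` and `Nat.card` are both `0`.
      have hinf : Infinite F := by
        by_contra hc
        rw [not_infinite_iff_finite] at hc
        exact hfin inferInstance
      rw [Nat.card_eq_zero_of_infinite, finrank_of_infinite_dimensional hfin, pow_zero, Nat.zero_sub,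
        Nat.sub_self]
  have hmul := H.card_eq_card_quotient_mul_card_subgroup
  rw [hH, hF] at hmul
  have hq : 1 < Fintype.card Fq := Fintype.one_lt_card
  rw [hcard, hmul, Nat.mul_div_cancel _ (by omega)]

/-- A subspace of dimension at least two contains two nonzero vectors whose ratio is not a
scalar. -/
lemma exists_ratio {V : Submodule Fq F} (hV : 2 ≤ finrank Fq V) :
    ∃ u ∈ V, ∃ v ∈ V, u ≠ 0 ∧ v ≠ 0 ∧ u * v⁻¹ ∉ Set.range (algebraMap Fq F) := by
  have : Nontrivial V := nontrivial_of_finrank_pos (R := Fq) (by omega)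
  obtain ⟨v, hv⟩ := exists_ne (0 : V)
  have hv0 : (v : F) ≠ 0 := by simpa using hv
  by_contra! hcon
  have : finrank Fq V ≤ 1 := by
    refine finrank_le_one v fun w => ?_
    by_cases hw : w = 0
    · exact ⟨0, by simp [hw]⟩
    · obtain ⟨c, hc⟩ := hcon w w.2 v v.2 (by simpa using hw) hv0
      refine ⟨c, Subtype.ext ?_⟩
      rw [Submodule.coe_smul, Algebra.smul_def, hc, inv_mul_cancel_right₀ hv0]
  omega

end

/-- `Orb(U)` has minimum distance `2k-2` and cardinality
`(q^n-1)/(q-1)` if and only if `U` is a Sidon space, i.e.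
`dim(U ∩ αU) ≤ 1` for every `α ∈ F_{q^n} \ F_q`. -/
theorem statement19
    {Fq Fn : Type*} [Field Fq] [Field Fn] [Fintype Fq] [Algebra Fq Fn]
    (q n k : ℕ) (hq : Fintype.card Fq = q) (hk : 2 ≤ k)
    (hdn : finrank Fq Fn = n)
    (U : Submodule Fq Fn) (hU : finrank Fq ↥U = k) :
    (minDist (orb U) = 2 * k - 2 ∧ (orb U).ncard = (q ^ n - 1) / (q - 1)) ↔
      ∀ α : Fn, α ∉ Set.range (algebraMap Fq Fn) →
        finrank Fq ↥(U ⊓ mulSub α U) ≤ 1 := by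
  have : FiniteDimensional Fq U := FiniteDimensional.of_finrank_pos (by omega)
  have hdist : ∀ a b : Fn, a ≠ 0 → b ≠ 0 → sdist (mulSub a U) (mulSub b U) =
      2 * k - 2 * finrank Fq ↥(mulSub a U ⊓ mulSub b U) := fun a b ha hb =>
    sdist_eq ((finrank_mulSub ha U).trans hU) ((finrank_mulSub hb U).trans hU)
  constructor
  · rintro ⟨hmin, -⟩ α hα
    have hα0 : α ≠ 0 := by
      rintro rfl
      exact hα ⟨0, map_zero _⟩
    -- The infimum is positive, so it is not the junk value of an empty set and is attained.
    have hne : {d : ℕ | ∃ V ∈ orb U, ∃ W ∈ orb U, V ≠ W ∧ d = sdist V W}.Nonempty := by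
      apply Nat.nonempty_of_pos_sInf
      change 0 < minDist (orb U)
      omega
    obtain ⟨_, ⟨a, rfl⟩, _, ⟨b, rfl⟩, -, hd⟩ := Nat.sInf_mem hne
    change minDist (orb U) = _ at hd
    rw [hdist _ _ a.ne_zero b.ne_zero] at hd
    have hfull : FullLengthOrbit U := fullLength_of_line (a := a) (b := b) (by omega)
    have hle : minDist (orb U) ≤ sdist U (mulSub α U) :=
      Nat.sInf_le ⟨U, ⟨1, (mulSub_one U).symm⟩, _, ⟨Units.mk0 α hα0, rfl⟩,
        fun h => hα (hfull α hα0 h.symm), rfl⟩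
    rw [sdist_eq hU ((finrank_mulSub hα0 U).trans hU)] at hle
    omega
  · intro hS
    have hfull : FullLengthOrbit U := by
      intro β _ hβ
      by_contra hn
      have h := hS β hn
      rw [hβ, inf_idem] at h
      omega
    refine ⟨?_, by rw [ncard_orb hfull, hq, hdn]⟩
    obtain ⟨u, hu, v, hv, hu0, hv0, hr⟩ := exists_ratio (V := U) (by omega)
    have hα0 : u * v⁻¹ ≠ 0 := mul_ne_zero hu0 (inv_ne_zero hv0)
    have hmem : u ∈ U ⊓ mulSub (u * v⁻¹) U :=
      ⟨hu, mem_mulSub.2 ⟨v, hv, inv_mul_cancel_right₀ hv0 u⟩⟩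
    have hpos : 0 < finrank Fq ↥(U ⊓ mulSub (u * v⁻¹) U) := by
      rw [Nat.pos_iff_ne_zero, Ne, Submodule.finrank_eq_zero]
      intro h
      rw [h] at hmem
      exact hu0 ((Submodule.mem_bot Fq).1 hmem)
    apply le_antisymm
    · have hle : minDist (orb U) ≤ sdist U (mulSub (u * v⁻¹) U) :=
        Nat.sInf_le ⟨U, ⟨1, (mulSub_one U).symm⟩, _, ⟨Units.mk0 _ hα0, rfl⟩,
          fun h => hr (hfull _ hα0 h.symm), rfl⟩
      rw [sdist_eq hU ((finrank_mulSub hα0 U).trans hU)] at hle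
      omega
    · refine le_csInf ⟨_, U, ⟨1, (mulSub_one U).symm⟩, _, ⟨Units.mk0 _ hα0, rfl⟩,
          fun h => hr (hfull _ hα0 h.symm), rfl⟩ ?_
      rintro _ ⟨_, ⟨a, rfl⟩, _, ⟨b, rfl⟩, hne, rfl⟩
      rw [hdist _ _ a.ne_zero b.ne_zero, finrank_inf_mulSub a.ne_zero]
      have h1 := hS ((a : Fn)⁻¹ * b) (by
        rintro ⟨c, hc⟩
        have hb : (b : Fn) = a * algebraMap Fq Fn c := by
          rw [hc, mul_inv_cancel_left₀ a.ne_zero]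
        have hc0 : c ≠ 0 := by
          rintro rfl
          simp at hb
        exact hne (by rw [hb, ← mulSub_mulSub, mulSub_algebraMap hc0]))
      omega
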